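/- Let A be as in the context and let B := 1 + 2i(A − i·1)⁻¹ be its Cayley transform. Let φ̃ : ℂ → ℂ be smooth and compactly supported with 1 ∉ supp φ̃, such that for every N ∈ ℕ there is a constant C_N with |∂φ̃/∂w̄(w)| ≤ C_N·| |w| − 1 |^N for all w ∈ ℂ. Define ψ(z) = φ̃((z+i)/(z−i)) for z ≠ i and ψ(i) = 0. Then both of the following Bochner integrals converge and are equal: −(1/π)∫_ℂ (∂φ̃/∂w̄)(w)·(w·1 − B)⁻¹ L(dw) = −(1/π)∫_ℂ (∂ψ/∂z̄)(z)·(z·1 − A)⁻¹ L(dz). -/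

import Mathlib

open MeasureTheory Complex Real

noncomputable section

/-- The Cauchy–Riemann operator `∂F/∂z̄ = (∂F/∂x + i ∂F/∂y)/2`. -/
def dbar (F : ℂ → ℂ) (z : ℂ) : ℂ :=
  (fderiv ℝ F z 1 + Complex.I * fderiv ℝ F z Complex.I) / 2

/-- The resolvent `(z·1 − P)⁻¹` (equal to `0` when `z·1 − P` is not invertible). -/
def res {B : Type*} [NormedAddCommGroup B] [NormedSpace ℂ B] (P : B →L[ℂ] B) (z : ℂ) :
    B →L[ℂ] B := Ring.inverse (z • (1 : B →L[ℂ] B) - P)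

/-- The spectrum of `A` is real. -/
def RealSpectrum {B : Type*} [NormedAddCommGroup B] [NormedSpace ℂ B]
    (A : B →L[ℂ] B) : Prop := ∀ z ∈ spectrum ℂ A, z.im = 0

/-- The resolvent of `A` has locally temperate growth near `ℝ`. -/
def TemperateResolventLoc {B : Type*} [NormedAddCommGroup B] [NormedSpace ℂ B]
    (A : B →L[ℂ] B) : Prop :=
  ∀ R > (0:ℝ), ∃ C N : ℝ, 0 ≤ C ∧ 0 ≤ N ∧ ∀ z : ℂ, z.im ≠ 0 → ‖z‖ ≤ R →
    ‖res A z‖ ≤ C * |z.im| ^ (-N)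

/-
Substitute `w = C(z)` and let `D` be the derivative of `C`. The Jacobian is `|D|²` and
`∂̄(φ ∘ C) = (∂̄φ ∘ C) · conj D`, while the resolvent identity gives
`(C(z) - B)⁻¹ = (C(z) - 1)⁻¹ + D(z)⁻¹ (z - A)⁻¹`. Hence the two integrands correspond up to the
scalar term `∂̄φ / (w - 1)`, which is `∂̄` of the compactly supported `C¹` function `φ / (w - 1)`
and so integrates to zero. The integrals converge because `∂̄ψ` vanishes to infinite order on `ℝ`,
where the resolvent of `A` blows up only polynomially: the product extends continuously by zero
and has compact support.
-/

open scoped ComplexConjugate Topology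

section Support

variable {E F : Type*} [NormedAddCommGroup E] [NormedSpace ℝ E] [NormedAddCommGroup F]
  [NormedSpace ℝ F]

lemma contDiff_of_forall_mem_tsupport {n : WithTop ℕ∞} {f : E → F}
    (hf : ∀ x ∈ tsupport f, ContDiffAt ℝ n f x) : ContDiff ℝ n f :=
  contMDiff_iff_contDiff.1 <| contMDiff_of_tsupport fun x hx ↦ (hf x hx).contMDiffAt

lemma integral_fderiv_apply_eq_zero [MeasurableSpace E] [BorelSpace E] [FiniteDimensional ℝ E]
    {μ : Measure E} [μ.IsAddHaarMeasure] {f : E → F} (hf : ContDiff ℝ 1 f)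
    (hsupp : HasCompactSupport f) (v : E) : ∫ x, fderiv ℝ f x v ∂μ = 0 := by
  have hf' : Continuous fun x ↦ fderiv ℝ f x v := by
    have := hf.continuous_fderiv one_ne_zero
    fun_prop
  have hparts := integral_smul_fderiv_eq_neg_fderiv_smul_of_integrable (𝕜 := ℝ) (μ := μ)
    (f := fun _ ↦ (1 : ℝ)) (g := f) (v := v) (by simp)
    (by simpa using hf'.integrable_of_hasCompactSupport (hsupp.fderiv_apply ℝ v))
    (by simpa using hf.continuous.integrable_of_hasCompactSupport hsupp)
    (fun _ _ ↦ differentiableAt_const _) (fun x _ ↦ hf.differentiable one_ne_zero x)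
  simpa using hparts

end Support

section Dbar

variable {φ h : ℂ → ℂ} {z : ℂ}

lemma dbar_eq_of_eventuallyEq (hφh : φ =ᶠ[𝓝 z] h) : dbar φ z = dbar h z := by
  rw [dbar, dbar, hφh.fderiv_eq]

lemma dbar_of_notMem_tsupport (hz : z ∉ tsupport φ) : dbar φ z = 0 := by
  simp [dbar, fderiv_of_notMem_tsupport ℝ hz]

lemma hasCompactSupport_dbar (hφ : HasCompactSupport φ) : HasCompactSupport (dbar φ) :=
  .intro hφ fun _ ↦ dbar_of_notMem_tsupport

lemma continuous_dbar (hφ : ContDiff ℝ 1 φ) : Continuous (dbar φ) := by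
  have := hφ.continuous_fderiv one_ne_zero
  unfold dbar
  fun_prop

lemma map_add_I_mul_map_I_mul (L : ℂ →L[ℝ] ℂ) (c : ℂ) :
    L c + I * L (I * c) = (L 1 + I * L I) * conj c := by
  have hL (w : ℂ) : L w = w.re * L 1 + w.im * L I := by
    have hw : w = w.re • (1 : ℂ) + w.im • I := by simp
    conv_lhs => rw [hw]
    rw [map_add, map_smul, map_smul, real_smul, real_smul]
  have hconj : conj c = c.re - c.im * I := by simp [Complex.ext_iff]
  rw [hL c, hL (I * c), hconj]
  simp only [I_mul_re, I_mul_im, ofReal_neg]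
  linear_combination (c.im * L I) * I_sq

lemma dbar_comp (hφ : DifferentiableAt ℝ φ (h z)) (hh : DifferentiableAt ℂ h z) :
    dbar (φ ∘ h) z = dbar φ (h z) * conj (deriv h z) := by
  have hlin := map_add_I_mul_map_I_mul (fderiv ℝ φ (h z)) (deriv h z)
  simp only [dbar, fderiv_comp z hφ (hh.restrictScalars ℝ), hh.fderiv_restrictScalars ℝ]
  simp only [ContinuousLinearMap.comp_apply, ContinuousLinearMap.coe_restrictScalars',
    fderiv_eq_smul_deriv, smul_eq_mul, one_mul, hlin]
  ring

lemma dbar_mul (hφ : DifferentiableAt ℝ φ z) (hh : DifferentiableAt ℂ h z) :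
    dbar (φ * h) z = dbar φ z * h z := by
  simp only [dbar, fderiv_mul hφ (hh.restrictScalars ℝ), hh.fderiv_restrictScalars ℝ]
  simp only [add_apply, smul_apply, ContinuousLinearMap.coe_restrictScalars',
    fderiv_eq_smul_deriv, smul_eq_mul, one_mul]
  linear_combination (φ z * deriv h z / 2) * I_sq

lemma integral_dbar_eq_zero (hφ : ContDiff ℝ 1 φ) (hsupp : HasCompactSupport φ) :
    ∫ w, dbar φ w = 0 := by
  have hint (v : ℂ) : Integrable fun w ↦ fderiv ℝ φ w v := by
    have := hφ.continuous_fderiv one_ne_zero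
    exact Continuous.integrable_of_hasCompactSupport (by fun_prop) (hsupp.fderiv_apply ℝ v)
  simp only [dbar]
  rw [integral_div, integral_add (hint 1) ((hint I).const_mul I), integral_const_mul,
    integral_fderiv_apply_eq_zero hφ hsupp, integral_fderiv_apply_eq_zero hφ hsupp]
  simp

variable {U : Set ℂ}

lemma contDiff_mul_of_tsupport_subset (hφ : ContDiff ℝ 1 φ) (hU : IsOpen U)
    (hφU : tsupport φ ⊆ U) (hh : DifferentiableOn ℂ h U) : ContDiff ℝ 1 (φ * h) :=
  contDiff_of_forall_mem_tsupport fun w hw ↦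
    have hwU : U ∈ 𝓝 w := hU.mem_nhds (hφU (tsupport_mul_subset_left hw))
    hφ.contDiffAt.mul ((hh.analyticAt hwU).contDiffAt.restrict_scalars ℝ)

lemma dbar_mul_of_tsupport_subset (hφ : ContDiff ℝ 1 φ) (hU : IsOpen U)
    (hφU : tsupport φ ⊆ U) (hh : DifferentiableOn ℂ h U) :
    dbar (φ * h) = dbar φ * h := by
  ext w
  by_cases hw : w ∈ tsupport φ
  · exact dbar_mul (hφ.differentiable one_ne_zero w)
      (hh.differentiableAt (hU.mem_nhds (hφU hw)))
  · have hwh : w ∉ tsupport (φ * h) := fun hw' ↦ hw (tsupport_mul_subset_left hw')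
    rw [Pi.mul_apply, dbar_of_notMem_tsupport hw, zero_mul, dbar_of_notMem_tsupport hwh]

lemma integrable_dbar_mul (hφ : ContDiff ℝ 1 φ) (hsupp : HasCompactSupport φ) (hU : IsOpen U)
    (hφU : tsupport φ ⊆ U) (hh : DifferentiableOn ℂ h U) : Integrable (dbar φ * h) := by
  rw [← dbar_mul_of_tsupport_subset hφ hU hφU hh]
  have hcont := continuous_dbar (contDiff_mul_of_tsupport_subset hφ hU hφU hh)
  exact hcont.integrable_of_hasCompactSupport (hasCompactSupport_dbar hsupp.mul_right)

lemma integral_dbar_mul_eq_zero (hφ : ContDiff ℝ 1 φ) (hsupp : HasCompactSupport φ)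
    (hU : IsOpen U) (hφU : tsupport φ ⊆ U) (hh : DifferentiableOn ℂ h U) :
    ∫ w, dbar φ w * h w = 0 := by
  change ∫ w, (dbar φ * h) w = 0
  rw [← dbar_mul_of_tsupport_subset hφ hU hφU hh]
  exact integral_dbar_eq_zero (contDiff_mul_of_tsupport_subset hφ hU hφU hh) hsupp.mul_right

variable {E : Type*} [NormedAddCommGroup E] [NormedSpace ℂ E]

lemma integrable_dbar_smul_sub_iff (hφ : ContDiff ℝ 1 φ) (hsupp : HasCompactSupport φ)
    (hU : IsOpen U) (hφU : tsupport φ ⊆ U) (hh : DifferentiableOn ℂ h U) (F : ℂ → E) (v : E) :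
    Integrable (fun w ↦ dbar φ w • (F w - h w • v)) ↔ Integrable fun w ↦ dbar φ w • F w := by
  have hh_int : Integrable fun w ↦ (dbar φ w * h w) • v :=
    (integrable_dbar_mul hφ hsupp hU hφU hh).smul_const v
  simp only [smul_sub, smul_smul]
  exact ⟨fun hsub ↦ by simpa [Pi.add_def] using hsub.add hh_int, fun hF ↦ hF.sub hh_int⟩

lemma integral_dbar_smul_sub [CompleteSpace E] (hφ : ContDiff ℝ 1 φ)
    (hsupp : HasCompactSupport φ) (hU : IsOpen U) (hφU : tsupport φ ⊆ U)
    (hh : DifferentiableOn ℂ h U) {F : ℂ → E} (hF : Integrable fun w ↦ dbar φ w • F w) (v : E) :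
    ∫ w, dbar φ w • (F w - h w • v) = ∫ w, dbar φ w • F w := by
  have hh_int : Integrable fun w ↦ (dbar φ w * h w) • v :=
    (integrable_dbar_mul hφ hsupp hU hφU hh).smul_const v
  have hh_zero : ∫ w, (dbar φ w * h w) • v = 0 := by
    rw [integral_smul_const, integral_dbar_mul_eq_zero hφ hsupp hU hφU hh, zero_smul]
  simp only [smul_sub, smul_smul]
  rw [integral_sub hF hh_int, hh_zero, sub_zero]

end Dbar

section Flat

/-- `g` vanishes to infinite order along the zero set of `ρ`. The bounds are global, with `|ρ|` in
the role of the distance to that set: `ρ = Im` for the real line, `ρ w = ‖w‖ - 1` for the unit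
circle. -/
def FlatAlong {X E : Type*} [Norm E] (ρ : X → ℝ) (g : X → E) : Prop :=
  ∀ n : ℕ, ∃ C : ℝ, ∀ x, ‖g x‖ ≤ C * |ρ x| ^ n

/-- `F` grows at most like a power of `|Im z|⁻¹` at the real line, locally uniformly. -/
def LocallyTemperateOffReal {E : Type*} [Norm E] (F : ℂ → E) : Prop :=
  ∀ R > (0 : ℝ), ∃ C N : ℝ, ∀ z : ℂ, z.im ≠ 0 → ‖z‖ ≤ R → ‖F z‖ ≤ C * |z.im| ^ (-N)

lemma FlatAlong.apply_eq_zero {X E : Type*} [NormedAddCommGroup E] {ρ : X → ℝ} {g : X → E}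
    (hg : FlatAlong ρ g) {x : X} (hx : ρ x = 0) : g x = 0 := by
  obtain ⟨C, hC⟩ := hg 1
  simpa [hx] using hC x

variable {E : Type*} [NormedAddCommGroup E] [NormedSpace ℂ E] {g : ℂ → ℂ} {F : ℂ → E}

lemma FlatAlong.exists_norm_smul_le (hg : FlatAlong im g) (hF : LocallyTemperateOffReal F)
    {R : ℝ} (hR : 0 < R) :
    ∃ K s : ℝ, 0 < s ∧ ∀ z : ℂ, ‖z‖ ≤ R → ‖g z • F z‖ ≤ K * |z.im| ^ s := by
  obtain ⟨C, N, hC⟩ := hF R hR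
  obtain ⟨D, hD⟩ := hg (⌈N⌉₊ + 1)
  have hs : 0 < ((⌈N⌉₊ + 1 : ℕ) : ℝ) - N := by
    push_cast
    linarith [Nat.le_ceil N]
  refine ⟨D * C, _, hs, fun z hz ↦ ?_⟩
  by_cases him : z.im = 0
  · rw [hg.apply_eq_zero him, him, abs_zero, Real.zero_rpow hs.ne']
    simp
  · calc ‖g z • F z‖ = ‖g z‖ * ‖F z‖ := norm_smul _ _
      _ ≤ (D * |z.im| ^ (⌈N⌉₊ + 1)) * (C * |z.im| ^ (-N)) :=
        mul_le_mul (hD z) (hC z him hz) (norm_nonneg _) ((norm_nonneg _).trans (hD z))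
      _ = D * C * |z.im| ^ (((⌈N⌉₊ + 1 : ℕ) : ℝ) - N) := by
        rw [sub_eq_add_neg, Real.rpow_add (abs_pos.2 him), Real.rpow_natCast]
        ring

lemma FlatAlong.continuous_smul (hg : FlatAlong im g) (hg_cont : Continuous g)
    (hF : LocallyTemperateOffReal F) (hF_cont : ContinuousOn F {z | z.im ≠ 0}) :
    Continuous fun z ↦ g z • F z := by
  refine continuous_iff_continuousAt.2 fun z₀ ↦ ?_
  by_cases him : z₀.im = 0
  · obtain ⟨K, s, hs, hK⟩ := hg.exists_norm_smul_le hF (R := ‖z₀‖ + 1) (by positivity)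
    have hnear : ∀ᶠ z in 𝓝 z₀, ‖z‖ ≤ ‖z₀‖ + 1 :=
      continuous_norm.continuousAt.eventually_le_const (lt_add_one _)
    have hbound : Filter.Tendsto (fun z : ℂ ↦ K * |z.im| ^ s) (𝓝 z₀) (𝓝 0) := by
      have : Continuous fun z : ℂ ↦ K * |z.im| ^ s :=
        continuous_const.mul (continuous_im.abs.rpow_const fun _ ↦ .inr hs.le)
      simpa [him, Real.zero_rpow hs.ne'] using this.tendsto z₀
    rw [ContinuousAt, hg.apply_eq_zero him, zero_smul]
    exact squeeze_zero_norm' (hnear.mono hK) hbound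
  · have hopen : IsOpen {z : ℂ | z.im ≠ 0} := isOpen_ne_fun continuous_im continuous_const
    exact hg_cont.continuousAt.smul (hF_cont.continuousAt (hopen.mem_nhds him))

end Flat

section ChangeOfVariables

variable {E : Type*} [NormedAddCommGroup E] [NormedSpace ℝ E] {e : OpenPartialHomeomorph ℂ ℂ}

lemma det_restrictScalars_fderiv (f : ℂ → ℂ) (z : ℂ) :
    ((fderiv ℂ f z).restrictScalars ℝ).det = ‖deriv f z‖ ^ 2 := by
  simp [ContinuousLinearMap.det, LinearMap.det_restrictScalars, Algebra.norm_complex_eq,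
    normSq_eq_norm_sq]

lemma integrableOn_target_iff_of_differentiableOn (he : DifferentiableOn ℂ e e.source)
    (f : ℂ → E) :
    IntegrableOn f e.target ↔ IntegrableOn (fun z ↦ ‖deriv e z‖ ^ 2 • f (e z)) e.source := by
  have he' : ∀ z ∈ e.source,
      HasFDerivWithinAt e ((fderiv ℂ e z).restrictScalars ℝ) e.source z := fun z hz ↦
    ((he.differentiableAt (e.open_source.mem_nhds hz)).hasFDerivAt.restrictScalars
      ℝ).hasFDerivWithinAt
  have h := integrableOn_image_iff_integrableOn_abs_det_fderiv_smul volume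
    e.open_source.measurableSet he' e.injOn f
  simpa only [e.image_source_eq_target, det_restrictScalars_fderiv, abs_sq] using h

lemma setIntegral_target_eq_of_differentiableOn (he : DifferentiableOn ℂ e e.source)
    (f : ℂ → E) :
    ∫ w in e.target, f w = ∫ z in e.source, ‖deriv e z‖ ^ 2 • f (e z) := by
  have h := integral_target_eq_integral_abs_det_fderiv_smul volume (f := e)
    (fun z hz ↦ (he.differentiableAt (e.open_source.mem_nhds hz)).hasFDerivAt.restrictScalars ℝ) f
  simpa only [det_restrictScalars_fderiv, abs_sq] using h

end ChangeOfVariables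

section Cayley

/-- The Cayley map `z ↦ (z + i)/(z − i)` as a homeomorphism from `ℂ ∖ {i}` onto `ℂ ∖ {1}`. -/
def cayley : OpenPartialHomeomorph ℂ ℂ where
  toFun z := (z + I) / (z - I)
  invFun w := I * (w + 1) / (w - 1)
  source := {I}ᶜ
  target := {1}ᶜ
  map_source' z hz := by
    have hz : z - I ≠ 0 := sub_ne_zero.2 hz
    rw [Set.mem_compl_singleton_iff, ne_eq, div_eq_one_iff_eq hz]
    intro h
    exact I_ne_zero (by linear_combination h / 2)
  map_target' w hw := by
    have hw : w - 1 ≠ 0 := sub_ne_zero.2 hw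
    rw [Set.mem_compl_singleton_iff, ne_eq, div_eq_iff hw]
    intro h
    exact I_ne_zero (by linear_combination h / 2)
  left_inv' z hz := by
    have hz : z - I ≠ 0 := sub_ne_zero.2 hz
    have hsub : (z + I) / (z - I) - 1 = 2 * I / (z - I) := by field_simp; ring
    rw [hsub]
    field_simp
    ring
  right_inv' w hw := by
    have hw : w - 1 ≠ 0 := sub_ne_zero.2 hw
    have hsub : I * (w + 1) / (w - 1) - I = 2 * I / (w - 1) := by field_simp; ring
    rw [hsub]
    field_simp
    ring
  continuousOn_toFun := .div (by fun_prop) (by fun_prop) fun _ ↦ sub_ne_zero.2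
  continuousOn_invFun := .div (by fun_prop) (by fun_prop) fun _ ↦ sub_ne_zero.2
  open_source := isOpen_compl_singleton
  open_target := isOpen_compl_singleton

variable {z : ℂ}

lemma cayley_apply (z : ℂ) : cayley z = (z + I) / (z - I) := rfl

lemma hasDerivAt_cayley (hz : z ≠ I) : HasDerivAt cayley (-(2 * I) / (z - I) ^ 2) z := by
  have h := ((hasDerivAt_id z).add_const I).div ((hasDerivAt_id z).sub_const I)
    (sub_ne_zero.2 hz)
  exact h.congr_deriv (by simp only [id_eq]; ring)

lemma deriv_cayley (hz : z ≠ I) : deriv cayley z = -(2 * I) / (z - I) ^ 2 :=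
  (hasDerivAt_cayley hz).deriv

lemma differentiableOn_cayley : DifferentiableOn ℂ cayley {I}ᶜ := fun _ hz ↦
  (hasDerivAt_cayley hz).differentiableAt.differentiableWithinAt

lemma cayley_sub_one (hz : z ≠ I) : cayley z - 1 = 2 * I / (z - I) := by
  have hz : z - I ≠ 0 := sub_ne_zero.2 hz
  rw [cayley_apply]
  field_simp
  ring

lemma norm_cayley_sq_sub_one (hz : z ≠ I) :
    ‖cayley z‖ ^ 2 - 1 = 2 * z.im * ‖deriv cayley z‖ := by
  have hz' : ‖z - I‖ ≠ 0 := norm_ne_zero_iff.2 (sub_ne_zero.2 hz)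
  have hnum : ‖z + I‖ ^ 2 - ‖z - I‖ ^ 2 = 4 * z.im := by
    simp only [← normSq_eq_norm_sq, normSq_apply, add_re, add_im, sub_re, sub_im, I_re, I_im]
    ring
  rw [cayley_apply, deriv_cayley hz, norm_div, norm_div, norm_pow, norm_neg, norm_mul, norm_I,
    Complex.norm_two]
  field_simp
  linear_combination hnum

lemma abs_norm_cayley_sub_one_le (hz : z ≠ I) :
    |‖cayley z‖ - 1| ≤ 2 * |z.im| * ‖deriv cayley z‖ := by
  calc |‖cayley z‖ - 1| ≤ |‖cayley z‖ - 1| * |‖cayley z‖ + 1| :=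
        le_mul_of_one_le_right (abs_nonneg _)
          (le_abs.2 (.inl (le_add_of_nonneg_left (norm_nonneg _))))
    _ = |‖cayley z‖ ^ 2 - 1| := by rw [← abs_mul]; ring_nf
    _ = 2 * |z.im| * ‖deriv cayley z‖ := by
      rw [norm_cayley_sq_sub_one hz, abs_mul, abs_mul, abs_two, abs_norm]

variable {E : Type*} [NormedAddCommGroup E] [NormedSpace ℝ E]

lemma integrable_iff_integrable_comp_cayley (f : ℂ → E) :
    Integrable f ↔ Integrable fun z ↦ ‖deriv cayley z‖ ^ 2 • f (cayley z) := by
  have h := integrableOn_target_iff_of_differentiableOn differentiableOn_cayley f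
  change IntegrableOn f {1}ᶜ ↔ IntegrableOn _ {I}ᶜ at h
  simpa only [IntegrableOn, restrict_compl_singleton] using h

lemma integral_eq_integral_comp_cayley (f : ℂ → E) :
    ∫ w, f w = ∫ z, ‖deriv cayley z‖ ^ 2 • f (cayley z) := by
  have h := setIntegral_target_eq_of_differentiableOn differentiableOn_cayley f
  change ∫ w in {1}ᶜ, f w = ∫ z in {I}ᶜ, _ at h
  simpa only [restrict_compl_singleton] using h

end Cayley

section CayleyPullback

/-- The pullback of `φ` along the Cayley map, with value `0` at the pole `i`. -/
def cayleyPullback (φ : ℂ → ℂ) (z : ℂ) : ℂ :=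
  if z = I then 0 else φ (cayley z)

variable {φ : ℂ → ℂ} {z : ℂ}

lemma cayleyPullback_eventuallyEq (φ : ℂ → ℂ) (hz : z ≠ I) :
    cayleyPullback φ =ᶠ[𝓝 z] φ ∘ cayley :=
  (isOpen_ne.eventually_mem hz).mono fun _ hy ↦ if_neg hy

lemma dbar_cayleyPullback (hφ : Differentiable ℝ φ) (hz : z ≠ I) :
    dbar (cayleyPullback φ) z = dbar φ (cayley z) * conj (deriv cayley z) := by
  rw [dbar_eq_of_eventuallyEq (cayleyPullback_eventuallyEq φ hz),
    dbar_comp (hφ _) (hasDerivAt_cayley hz).differentiableAt]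

lemma isCompact_cayley_symm_image_tsupport (hsupp : HasCompactSupport φ)
    (hφ_one : (1 : ℂ) ∉ tsupport φ) : IsCompact (cayley.symm '' tsupport φ) :=
  hsupp.isCompact.image_of_continuousOn <|
    cayley.continuousOn_symm.mono (Set.subset_compl_singleton_iff.2 hφ_one)

lemma cayleyPullback_eq_zero_of_notMem_image (hz : z ∉ cayley.symm '' tsupport φ) :
    cayleyPullback φ z = 0 := by
  refine ite_eq_left_iff.2 fun hzI ↦ image_eq_zero_of_notMem_tsupport fun hmem ↦ hz ?_
  exact ⟨cayley z, hmem, cayley.left_inv hzI⟩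

lemma hasCompactSupport_cayleyPullback (hsupp : HasCompactSupport φ)
    (hφ_one : (1 : ℂ) ∉ tsupport φ) : HasCompactSupport (cayleyPullback φ) :=
  .intro (isCompact_cayley_symm_image_tsupport hsupp hφ_one)
    fun _ ↦ cayleyPullback_eq_zero_of_notMem_image

lemma I_notMem_tsupport_cayleyPullback (hsupp : HasCompactSupport φ)
    (hφ_one : (1 : ℂ) ∉ tsupport φ) : I ∉ tsupport (cayleyPullback φ) := by
  have hsub : tsupport (cayleyPullback φ) ⊆ cayley.symm '' tsupport φ :=
    closure_minimal (Function.support_subset_iff'.2 fun _ ↦ cayleyPullback_eq_zero_of_notMem_image)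
      (isCompact_cayley_symm_image_tsupport hsupp hφ_one).isClosed
  intro hI
  obtain ⟨w, hw, hwI⟩ := hsub hI
  exact cayley.map_target (x := w) (ne_of_mem_of_not_mem hw hφ_one) hwI

lemma contDiff_cayleyPullback (hφ : ContDiff ℝ 1 φ) (hsupp : HasCompactSupport φ)
    (hφ_one : (1 : ℂ) ∉ tsupport φ) : ContDiff ℝ 1 (cayleyPullback φ) := by
  refine contDiff_of_forall_mem_tsupport fun z hz ↦ ?_
  have hzI : z ≠ I := ne_of_mem_of_not_mem hz (I_notMem_tsupport_cayleyPullback hsupp hφ_one)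
  have hcayley : ContDiffAt ℂ 1 cayley z :=
    (differentiableOn_cayley.analyticAt (isOpen_compl_singleton.mem_nhds hzI)).contDiffAt
  exact (hφ.contDiffAt.comp z (hcayley.restrict_scalars ℝ)).congr_of_eventuallyEq
    (cayleyPullback_eventuallyEq φ hzI)

lemma flatAlong_dbar_cayleyPullback (hφ : Differentiable ℝ φ) (hsupp : HasCompactSupport φ)
    (hφ_one : (1 : ℂ) ∉ tsupport φ) (hflat : FlatAlong (fun w ↦ ‖w‖ - 1) (dbar φ)) :
    FlatAlong im (dbar (cayleyPullback φ)) := by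
  have hI := I_notMem_tsupport_cayleyPullback hsupp hφ_one
  have hderiv : ContinuousOn (deriv cayley) {I}ᶜ :=
    (differentiableOn_cayley.deriv isOpen_compl_singleton).continuousOn
  obtain ⟨M, hM⟩ := (hasCompactSupport_cayleyPullback hsupp
    hφ_one).isCompact.exists_bound_of_continuousOn
      (hderiv.mono (Set.subset_compl_singleton_iff.2 hI))
  intro n
  obtain ⟨C, hC⟩ := hflat n
  have hC0 : 0 ≤ C := by simpa using (norm_nonneg _).trans (hC 0)
  refine ⟨C * (2 * |M|) ^ n * |M|, fun z ↦ ?_⟩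
  by_cases hz : z ∈ tsupport (cayleyPullback φ)
  · have hzI : z ≠ I := ne_of_mem_of_not_mem hz hI
    have hMz : ‖deriv cayley z‖ ≤ |M| := (hM z hz).trans (le_abs_self M)
    calc ‖dbar (cayleyPullback φ) z‖ = ‖dbar φ (cayley z)‖ * ‖deriv cayley z‖ := by
          rw [dbar_cayleyPullback hφ hzI, norm_mul, norm_conj]
      _ ≤ C * (2 * |z.im| * ‖deriv cayley z‖) ^ n * ‖deriv cayley z‖ := by
          gcongr
          exact (hC _).trans (by gcongr; exact abs_norm_cayley_sub_one_le hzI)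
      _ ≤ C * (2 * |z.im| * |M|) ^ n * |M| := by gcongr
      _ = C * (2 * |M|) ^ n * |M| * |z.im| ^ n := by ring
  · rw [dbar_of_notMem_tsupport hz, norm_zero]
    positivity

end CayleyPullback

section Resolvent

lemma resolvent_sub_resolvent_eq_smul_mul {R 𝔄 : Type*} [CommRing R] [Ring 𝔄] [Algebra R 𝔄]
    {a : 𝔄} {r s : R} (hr : r ∈ resolventSet R a) (hs : s ∈ resolventSet R a) :
    resolvent a r - resolvent a s = (s - r) • (resolvent a r * resolvent a s) := by
  have hdiff : algebraMap R 𝔄 s - a - (algebraMap R 𝔄 r - a) = (s - r) • 1 := by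
    rw [sub_sub_sub_cancel_right, ← map_sub, Algebra.algebraMap_eq_smul_one]
  calc resolvent a r - resolvent a s
      = resolvent a r * (algebraMap R 𝔄 s - a - (algebraMap R 𝔄 r - a)) * resolvent a s := by
        simp only [resolvent]
        rw [mul_sub, sub_mul, Ring.inverse_mul_cancel _ hr, one_mul,
          Ring.mul_inverse_cancel_right _ _ hs]
    _ = (s - r) • (resolvent a r * resolvent a s) := by
        rw [hdiff, mul_smul_comm, mul_one, smul_mul_assoc]

lemma one_add_smul_resolvent_mul_one_sub_smul_resolvent {R 𝔄 : Type*} [CommRing R] [Ring 𝔄]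
    [Algebra R 𝔄] {a : 𝔄} {r s : R} (hr : r ∈ resolventSet R a) (hs : s ∈ resolventSet R a) :
    (1 + (s - r) • resolvent a r) * (1 - (s - r) • resolvent a s) = 1 := by
  have h := resolvent_sub_resolvent_eq_smul_mul hr hs
  rw [add_mul, one_mul, mul_sub, mul_one, smul_mul_smul_comm, mul_smul, ← h, smul_sub]
  abel

variable {𝔄 : Type*} [Ring 𝔄] [Algebra ℂ 𝔄] {a : 𝔄} {z : ℂ}

/-- The Cayley transform `1 + 2i(a − i)⁻¹`, with the junk value `1` when `a - i` is not
invertible. -/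
def cayleyTransform (a : 𝔄) : 𝔄 :=
  1 + (2 * I) • Ring.inverse (a - I • (1 : 𝔄))

lemma cayleyTransform_eq_one_sub (a : 𝔄) :
    cayleyTransform a = 1 - (2 * I) • resolvent a I := by
  have hneg : a - I • (1 : 𝔄) = -1 * (algebraMap ℂ 𝔄 I - a) := by
    rw [Algebra.algebraMap_eq_smul_one, neg_one_mul, neg_sub]
  have hinv : Ring.inverse (-1 : 𝔄) = -1 := by
    simpa using Ring.inverse_unit (-1 : 𝔄ˣ)
  rw [cayleyTransform, hneg, Ring.inverse_mul (.inl isUnit_one.neg), hinv, mul_neg_one, smul_neg,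
    ← sub_eq_add_neg, resolvent]

lemma resolvent_cayleyTransform (hI : I ∈ resolventSet ℂ a) (hz : z ∈ resolventSet ℂ a)
    (hzI : z ≠ I) :
    resolvent (cayleyTransform a) (cayley z) =
      (cayley z - 1)⁻¹ • (1 : 𝔄) + (deriv cayley z)⁻¹ • resolvent a z := by
  have hz0 : z - I ≠ 0 := sub_ne_zero.2 hzI
  have hfactor : algebraMap ℂ 𝔄 (cayley z) - cayleyTransform a =
      (2 * I / (z - I)) • (1 + (z - I) • resolvent a I) := by
    rw [cayleyTransform_eq_one_sub, ← sub_add_cancel (cayley z) 1, cayley_sub_one hzI,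
      Algebra.algebraMap_eq_smul_one]
    match_scalars <;> field_simp
    ring
  have hinverse : (cayley z - 1)⁻¹ • (1 : 𝔄) + (deriv cayley z)⁻¹ • resolvent a z =
      ((z - I) / (2 * I)) • (1 - (z - I) • resolvent a z) := by
    rw [cayley_sub_one hzI, deriv_cayley hzI]
    match_scalars <;> field_simp
  have hscalar : 2 * I / (z - I) * ((z - I) / (2 * I)) = 1 := by field_simp
  have hright := one_add_smul_resolvent_mul_one_sub_smul_resolvent hI hz
  have hleft : (1 - (z - I) • resolvent a z) * (1 + (z - I) • resolvent a I) = 1 := by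
    simpa only [← neg_sub z I, neg_smul, ← sub_eq_add_neg, sub_neg_eq_add] using
      one_add_smul_resolvent_mul_one_sub_smul_resolvent hz hI
  rw [resolvent, hfactor, hinverse]
  exact Ring.inverse_unit ⟨_, _,
    by rw [smul_mul_smul_comm, hscalar, hright, one_smul],
    by rw [smul_mul_smul_comm, mul_comm, hscalar, hleft, one_smul]⟩

end Resolvent

section Calculus

variable {𝔄 : Type*} [NormedRing 𝔄] [NormedAlgebra ℂ 𝔄] {a : 𝔄} {φ : ℂ → ℂ}

lemma norm_deriv_cayley_sq_smul_dbar_smul_resolvent {z : ℂ} (hφ : Differentiable ℝ φ)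
    (hI : I ∈ resolventSet ℂ a) (hz : z ∈ resolventSet ℂ a) (hzI : z ≠ I) :
    ‖deriv cayley z‖ ^ 2 • dbar φ (cayley z) •
        (resolvent (cayleyTransform a) (cayley z) - (cayley z - 1)⁻¹ • 1) =
      dbar (cayleyPullback φ) z • resolvent a z := by
  have hderiv : deriv cayley z ≠ 0 := by
    simp [deriv_cayley hzI, sub_ne_zero.2 hzI]
  rw [resolvent_cayleyTransform hI hz hzI, add_sub_cancel_left, dbar_cayleyPullback hφ hzI,
    ← Complex.coe_smul, ofReal_pow, ← mul_conj', smul_smul, smul_smul]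
  congr 1
  field_simp

lemma comp_cayley_ae_eq_dbar_cayleyPullback_smul_resolvent
    (hspec : ∀ z ∈ spectrum ℂ a, z.im = 0) (hφ : Differentiable ℝ φ)
    (hflat : FlatAlong (fun w ↦ ‖w‖ - 1) (dbar φ)) :
    (fun z ↦ ‖deriv cayley z‖ ^ 2 • dbar φ (cayley z) •
        (resolvent (cayleyTransform a) (cayley z) - (cayley z - 1)⁻¹ • (1 : 𝔄))) =ᵐ[volume]
      fun z ↦ dbar (cayleyPullback φ) z • resolvent a z := by
  have hmem {z : ℂ} (hz : z.im ≠ 0) : z ∈ resolventSet ℂ a := not_not.1 fun h ↦ hz (hspec z h)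
  filter_upwards [Measure.ae_ne volume I] with z hzI
  by_cases him : z.im = 0
  · have hnorm : ‖cayley z‖ - 1 = 0 := by
      simpa [him] using abs_norm_cayley_sub_one_le hzI
    simp [dbar_cayleyPullback hφ hzI, hflat.apply_eq_zero hnorm]
  · exact norm_deriv_cayley_sq_smul_dbar_smul_resolvent hφ (hmem (by simp)) (hmem him) hzI

variable [CompleteSpace 𝔄]

lemma integrable_dbar_smul_resolvent (hspec : ∀ z ∈ spectrum ℂ a, z.im = 0)
    (hres : LocallyTemperateOffReal (resolvent a : ℂ → 𝔄)) (hφ : ContDiff ℝ 1 φ)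
    (hsupp : HasCompactSupport φ) (hflat : FlatAlong im (dbar φ)) :
    Integrable fun z ↦ dbar φ z • resolvent a z := by
  have hcont : ContinuousOn (resolvent a : ℂ → 𝔄) {z | z.im ≠ 0} :=
    HasDerivAt.continuousOn fun z hz ↦ spectrum.hasDerivAt_resolvent_const_left <|
      not_not.1 fun hz' ↦ hz (hspec z hz')
  exact (hflat.continuous_smul (continuous_dbar hφ) hres hcont).integrable_of_hasCompactSupport
    (hasCompactSupport_dbar hsupp).smul_right

theorem cayley_transform_calculus_general (hspec : ∀ z ∈ spectrum ℂ a, z.im = 0)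
    (hres : LocallyTemperateOffReal (resolvent a : ℂ → 𝔄)) (hφ : ContDiff ℝ 1 φ)
    (hsupp : HasCompactSupport φ) (hφ_one : (1 : ℂ) ∉ tsupport φ)
    (hflat : FlatAlong (fun w ↦ ‖w‖ - 1) (dbar φ)) :
    Integrable (fun w ↦ dbar φ w • resolvent (cayleyTransform a) w) ∧
    Integrable (fun z ↦ dbar (cayleyPullback φ) z • resolvent a z) ∧
    ∫ w, dbar φ w • resolvent (cayleyTransform a) w =
      ∫ z, dbar (cayleyPullback φ) z • resolvent a z := by
  have hφ' : Differentiable ℝ φ := hφ.differentiable one_ne_zero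
  have hsub : tsupport φ ⊆ {1}ᶜ := Set.subset_compl_singleton_iff.2 hφ_one
  have hpole : DifferentiableOn ℂ (fun w : ℂ ↦ (w - 1)⁻¹) {1}ᶜ :=
    .inv (by fun_prop) fun _ ↦ sub_ne_zero.2
  have hpull := comp_cayley_ae_eq_dbar_cayleyPullback_smul_resolvent hspec hφ' hflat
  have hψ_int : Integrable fun z ↦ dbar (cayleyPullback φ) z • resolvent a z :=
    integrable_dbar_smul_resolvent hspec hres (contDiff_cayleyPullback hφ hsupp hφ_one)
      (hasCompactSupport_cayleyPullback hsupp hφ_one)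
      (flatAlong_dbar_cayleyPullback hφ' hsupp hφ_one hflat)
  have hφ_int : Integrable fun w ↦ dbar φ w • resolvent (cayleyTransform a) w := by
    rw [← integrable_dbar_smul_sub_iff hφ hsupp isOpen_compl_singleton hsub hpole _ 1,
      integrable_iff_integrable_comp_cayley]
    exact hψ_int.congr hpull.symm
  refine ⟨hφ_int, hψ_int, ?_⟩
  rw [← integral_dbar_smul_sub hφ hsupp isOpen_compl_singleton hsub hpole hφ_int 1,
    integral_eq_integral_comp_cayley]
  exact integral_congr_ae hpull

lemma TemperateResolventLoc.locallyTemperateOffReal {B : Type*} [NormedAddCommGroup B]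
    [NormedSpace ℂ B] {A : B →L[ℂ] B} (hA : TemperateResolventLoc A) :
    LocallyTemperateOffReal (resolvent A : ℂ → B →L[ℂ] B) := fun R hR ↦
  let ⟨C, N, _, _, hC⟩ := hA R hR
  ⟨C, N, hC⟩

end Calculus

/-- (6.2): compatibility of the calculus with the Cayley transform
`C(z) = (z + i)/(z − i)`: `(φ ∘ C)(A) = φ(B)` where `B = 1 + 2i(A − i·1)⁻¹` is the
Cayley transform of `A`, both sides being given by Bochner-convergent integrals. -/
theorem cayley_transform_calculus {B : Type*} [NormedAddCommGroup B] [NormedSpace ℂ B]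
    [CompleteSpace B] (A : B →L[ℂ] B)
    (hspec : RealSpectrum A) (hres : TemperateResolventLoc A)
    (Bop : B →L[ℂ] B)
    (hBop : Bop = (1 : B →L[ℂ] B)
      + (2 * Complex.I) • Ring.inverse (A - Complex.I • (1 : B →L[ℂ] B)))
    (φ : ℂ → ℂ) (hφ_smooth : ContDiff ℝ (⊤ : ℕ∞) φ) (hφ_supp : HasCompactSupport φ)
    (hφ_one : (1 : ℂ) ∉ tsupport φ)
    (hφ_dbar : ∀ N : ℕ, ∃ C : ℝ, ∀ w : ℂ, ‖dbar φ w‖ ≤ C * |‖w‖ - 1| ^ N)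
    (ψ : ℂ → ℂ)
    (hψ : ∀ z : ℂ, ψ z = if z = Complex.I then 0 else φ ((z + Complex.I) / (z - Complex.I))) :
    Integrable (fun w : ℂ => dbar φ w • res Bop w) ∧
    Integrable (fun z : ℂ => dbar ψ z • res A z) ∧
    (-(1/(π:ℂ))) • ∫ w : ℂ, dbar φ w • res Bop w =
      (-(1/(π:ℂ))) • ∫ z : ℂ, dbar ψ z • res A z := by
  obtain rfl : ψ = cayleyPullback φ := funext hψ
  subst hBop
  obtain ⟨hφ_int, hψ_int, heq⟩ := cayley_transform_calculus_general hspec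
    hres.locallyTemperateOffReal (hφ_smooth.of_le (by simp)) hφ_supp hφ_one hφ_dbar
  exact ⟨hφ_int, hψ_int, congrArg _ heq⟩
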